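/- Let G_{n,d} be the configuration-model random d-regular multigraph on n vertices, fix reals k ≥ 1 and α with 2k/d < α < 1, and let Z_j denote the number of vertex subsets S with |S| = αn inducing exactly j edges. Then for all sufficiently large n (with αn and kαn integers), the expectation E[Z_j] is maximized over 0 ≤ j ≤ kαn at j = kαn; that is, E[Z_j] ≤ E[Z_{kαn}] for all integers 0 ≤ j ≤ kαn. -/

import Mathlib

/-!
The configuration model; for `α > 2k/d` and sufficiently large `n`, the expectation
`E[Z_j]` of the number of subsets of size `αn` inducing exactly `j` edges is maximized
over `0 ≤ j ≤ kαn` at `j = kαn`.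
-/

open scoped Classical

noncomputable section

def pairings (n d : ℕ) : Finset ((Fin n × Fin d) ≃ (Fin n × Fin d)) :=
  Finset.univ.filter fun M => (∀ x, M (M x) = x) ∧ ∀ x, M x ≠ x

/-- The number of edges (loops and parallel edges counted) of the sub-multigraph induced on
`S` by the configuration-model multigraph of the pairing `M`. -/
def edgesWithin {n d : ℕ} (M : (Fin n × Fin d) ≃ (Fin n × Fin d)) (S : Finset (Fin n)) : ℕ :=
  (Finset.univ.filter fun h : Fin n × Fin d => h.1 ∈ S ∧ (M h).1 ∈ S).card / 2

/-- `Z_{i,j}`: the number of vertex subsets `S` with `|S| = i` inducing exactly `j` edges. -/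
def Zcount (n d i j : ℕ) (M : (Fin n × Fin d) ≃ (Fin n × Fin d)) : ℕ :=
  (Finset.univ.filter fun S : Finset (Fin n) => S.card = i ∧ edgesWithin M S = j).card

/-- The expectation of `Z_{i,j}` under the uniform distribution on pairings. -/
def EZ (n d i j : ℕ) : ℝ :=
  (∑ M ∈ pairings n d, (Zcount n d i j M : ℝ)) / ((pairings n d).card : ℝ)

/-!
Switchings relate the pairings inducing `j` and `j + 1` edges on a set `A` of half-edges. Two
edges `{x, M x}`, `{y, M y}` leaving `A` can be replaced by `{x, y}` and `{M x, M y}`; this creates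
one edge inside `A` and one outside `A`, and is undone by the same operation. Counting triples
`(M, x, y)` gives the exact ratio of the two numbers of pairings, which is at least `1` as long as
`2 (j + 1) (N + 3) ≤ (D + 1) (D + 2)` for `D = |A|` and `N` half-edges in total. Summing over the
vertex sets of size `αn` compares the expectations.
-/

open Finset

section Pairings

variable {X : Type*}

/-- `M` is a perfect matching of the points of `X`, encoded as the permutation that sends each
point to its partner. -/
structure IsPairing (M : Equiv.Perm X) : Prop where
  involutive : Function.Involutive M
  apply_ne : ∀ x, M x ≠ x

/-- The switching of `M` that makes `x` and `y` partners, as well as their former partners,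
encoded as the conjugate of `M` by the transposition of `M x` and `y`. -/
def switching (M : Equiv.Perm X) (x y : X) : Equiv.Perm X :=
  Equiv.swap (M x) y * M * Equiv.swap (M x) y

/-- The points of `A` whose partner lies in `A`. -/
def innerPoints (M : Equiv.Perm X) (A : Finset X) : Finset X := {x ∈ A | M x ∈ A}

/-- The points of `A` whose partner lies outside `A`. -/
def crossingPoints (M : Equiv.Perm X) (A : Finset X) : Finset X := {x ∈ A | M x ∉ A}

variable {M : Equiv.Perm X} {A : Finset X} {x y z : X}

lemma mem_innerPoints : x ∈ innerPoints M A ↔ x ∈ A ∧ M x ∈ A := mem_filter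

lemma mem_crossingPoints : x ∈ crossingPoints M A ↔ x ∈ A ∧ M x ∉ A := mem_filter

lemma card_innerPoints_add_card_crossingPoints (M : Equiv.Perm X) (A : Finset X) :
    #(innerPoints M A) + #(crossingPoints M A) = #A :=
  card_filter_add_card_filter_not (M · ∈ A)

lemma switching_apply (M : Equiv.Perm X) (x y z : X) :
    switching M x y z = Equiv.swap (M x) y (M (Equiv.swap (M x) y z)) := rfl

lemma switching_apply_left (hx : M x ≠ x) (hxy : x ≠ y) : switching M x y x = y := by
  rw [switching_apply, Equiv.swap_apply_of_ne_of_ne hx.symm hxy, Equiv.swap_apply_left]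

lemma switching_apply_partner (hy : M y ≠ y) (hxy : x ≠ y) : switching M x y (M x) = M y := by
  rw [switching_apply, Equiv.swap_apply_left,
    Equiv.swap_apply_of_ne_of_ne (M.injective.ne hxy.symm) hy]

lemma switching_switching (hx : M x ≠ x) (hxy : x ≠ y) :
    switching (switching M x y) x (M x) = M := by
  rw [switching, switching_apply_left hx hxy, switching, Equiv.swap_comm y]
  simp only [mul_assoc, Equiv.swap_mul_self, mul_one, Equiv.swap_mul_self_mul]

lemma isPairing_switching (hM : IsPairing M) (x y : X) : IsPairing (switching M x y) where
  involutive z := by simp only [switching_apply, Equiv.swap_apply_self, hM.involutive _]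
  apply_ne z hz := hM.apply_ne _ (Equiv.swap_apply_eq_iff.mp hz)

namespace IsPairing

lemma switching_apply_right (hM : IsPairing M) (hxy : x ≠ y) : switching M x y y = x := by
  have h := (isPairing_switching hM x y).involutive x
  rwa [switching_apply_left (hM.apply_ne x) hxy] at h

lemma switching_apply_of_ne (hM : IsPairing M) (hx : z ≠ x) (hy : z ≠ y) (hMx : z ≠ M x)
    (hMy : z ≠ M y) : switching M x y z = M z := by
  rw [switching_apply, Equiv.swap_apply_of_ne_of_ne hMx hy,
    Equiv.swap_apply_of_ne_of_ne (M.injective.ne hx) ?_]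
  rintro rfl
  exact hMy (hM.involutive z).symm

lemma even_card_innerPoints (hM : IsPairing M) (A : Finset X) : Even #(innerPoints M A) := by
  have partner_mem : ∀ x ∈ innerPoints M A, M x ∈ innerPoints M A := fun x hx =>
    mem_innerPoints.mpr ⟨(mem_innerPoints.mp hx).2, (hM.involutive x).symm ▸
      (mem_innerPoints.mp hx).1⟩
  have h : ∑ _x ∈ innerPoints M A, (1 : ZMod 2) = 0 :=
    sum_involution (fun x _ => M x) (fun _ _ => by decide) (fun x _ _ => hM.apply_ne x)
      partner_mem fun x _ => hM.involutive x
  rwa [sum_const, nsmul_one, ZMod.natCast_eq_zero_iff_even] at h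

lemma innerPoints_switching (hM : IsPairing M) (hx : x ∈ crossingPoints M A)
    (hy : y ∈ crossingPoints M A) (hxy : x ≠ y) :
    innerPoints (switching M x y) A = insert x (insert y (innerPoints M A)) := by
  rw [mem_crossingPoints] at hx hy
  ext z
  simp only [mem_innerPoints, mem_insert]
  rcases eq_or_ne z x with rfl | hzx
  · simp only [switching_apply_left (hM.apply_ne z) hxy, hx.1, hy.1, and_self, true_or]
  rcases eq_or_ne z y with rfl | hzy
  · simp only [hM.switching_apply_right hxy, hx.1, hy.1, and_self, true_or, or_true]
  simp only [hzx, hzy, false_or]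
  rcases eq_or_ne z (M x) with rfl | hzMx
  · simp only [hx.2, false_and]
  rcases eq_or_ne z (M y) with rfl | hzMy
  · simp only [hy.2, false_and]
  rw [hM.switching_apply_of_ne hzx hzy hzMx hzMy]

lemma card_innerPoints_switching (hM : IsPairing M) (hx : x ∈ crossingPoints M A)
    (hy : y ∈ crossingPoints M A) (hxy : x ≠ y) :
    #(innerPoints (switching M x y) A) = #(innerPoints M A) + 2 := by
  rw [hM.innerPoints_switching hx hy hxy, card_insert_of_notMem, card_insert_of_notMem]
  · exact fun h => (mem_crossingPoints.mp hy).2 (mem_innerPoints.mp h).2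
  · rw [mem_insert, not_or]
    exact ⟨hxy, fun h => (mem_crossingPoints.mp hx).2 (mem_innerPoints.mp h).2⟩

variable [Fintype X]

lemma card_crossingPoints_compl (hM : IsPairing M) (A : Finset X) :
    #(crossingPoints M Aᶜ) = #(crossingPoints M A) := by
  have maps (B : Finset X) : ∀ x ∈ crossingPoints M Bᶜ, M x ∈ crossingPoints M B := by
    simp only [mem_crossingPoints, mem_compl, not_not, hM.involutive _]
    exact fun x hx => hx.symm
  refine card_nbij' M M (maps A) (fun x hx => maps Aᶜ x (by rwa [compl_compl]))
    (fun x _ => hM.involutive x) fun x _ => hM.involutive x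

lemma card_innerPoints_compl (hM : IsPairing M) (A : Finset X) :
    #(innerPoints M Aᶜ) = #Aᶜ - #(crossingPoints M A) := by
  rw [← card_innerPoints_add_card_crossingPoints M Aᶜ, hM.card_crossingPoints_compl,
    Nat.add_sub_cancel]

end IsPairing

variable [Fintype X]

/-- The pairings of `X` that induce exactly `j` edges on `A`, that is, under which `2 j` points of
`A` have their partner in `A`. -/
def pairingsInducing (A : Finset X) (j : ℕ) : Finset (Equiv.Perm X) :=
  {M | IsPairing M ∧ #(innerPoints M A) = 2 * j}

lemma mem_pairingsInducing {j : ℕ} :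
    M ∈ pairingsInducing A j ↔ IsPairing M ∧ #(innerPoints M A) = 2 * j := by
  simp only [pairingsInducing, mem_filter, mem_univ, true_and]

lemma card_crossingPoints_of_mem_pairingsInducing {j : ℕ} (hM : M ∈ pairingsInducing A j) :
    #(crossingPoints M A) = #A - 2 * j := by
  rw [← card_innerPoints_add_card_crossingPoints M A, (mem_pairingsInducing.mp hM).2,
    Nat.add_sub_cancel_left]

lemma switching_mem_of_mem_crossingPoints {j : ℕ} (hM : M ∈ pairingsInducing A j)
    (hx : x ∈ crossingPoints M A) (hy : y ∈ crossingPoints M A) (hxy : x ≠ y) :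
    switching M x y ∈ pairingsInducing A (j + 1) ∧ x ∈ innerPoints (switching M x y) A ∧
      M x ∈ innerPoints (switching M x y) Aᶜ := by
  rw [mem_pairingsInducing] at hM
  refine ⟨mem_pairingsInducing.mpr ⟨isPairing_switching hM.1 x y, ?_⟩, ?_, mem_innerPoints.mpr ?_⟩
  · rw [hM.1.card_innerPoints_switching hx hy hxy, hM.2, mul_add_one]
  · rw [hM.1.innerPoints_switching hx hy hxy]
    exact mem_insert_self _ _
  · rw [switching_apply_partner (hM.1.apply_ne y) hxy, mem_compl, mem_compl]
    exact ⟨(mem_crossingPoints.mp hx).2, (mem_crossingPoints.mp hy).2⟩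

lemma switching_mem_of_mem_innerPoints {j : ℕ} (hM : M ∈ pairingsInducing A (j + 1))
    (hx : x ∈ innerPoints M A) (hy : y ∈ innerPoints M Aᶜ) :
    switching M x y ∈ pairingsInducing A j ∧ x ∈ crossingPoints (switching M x y) A ∧
      M x ∈ crossingPoints (switching M x y) A := by
  rw [mem_pairingsInducing] at hM
  obtain ⟨hP, hcard⟩ := hM
  rw [mem_innerPoints] at hx hy
  simp only [mem_compl] at hy
  have hxy : x ≠ y := fun h => hy.1 (h ▸ hx.1)
  have hxc : x ∈ crossingPoints (switching M x y) A := by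
    rw [mem_crossingPoints, switching_apply_left (hP.apply_ne x) hxy]
    exact ⟨hx.1, hy.1⟩
  have hMxc : M x ∈ crossingPoints (switching M x y) A := by
    rw [mem_crossingPoints, switching_apply_partner (hP.apply_ne y) hxy]
    exact ⟨hx.2, hy.2⟩
  refine ⟨mem_pairingsInducing.mpr ⟨isPairing_switching hP x y, ?_⟩, hxc, hMxc⟩
  have h := (isPairing_switching hP x y).card_innerPoints_switching hxc hMxc (hP.apply_ne x).symm
  rw [switching_switching (hP.apply_ne x) hxy, hcard] at h
  omega

lemma card_sigma_offDiag_crossingPoints (A : Finset X) (j : ℕ) :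
    #((pairingsInducing A j).sigma fun M => (crossingPoints M A).offDiag) =
      #((pairingsInducing A (j + 1)).sigma fun M => innerPoints M A ×ˢ innerPoints M Aᶜ) := by
  let switch (t : Σ _ : Equiv.Perm X, X × X) : Σ _ : Equiv.Perm X, X × X :=
    ⟨switching t.1 t.2.1 t.2.2, t.2.1, t.1 t.2.1⟩
  have switch_switch {M : Equiv.Perm X} {x y : X} (hM : IsPairing M) (hxy : x ≠ y) :
      switch (switch ⟨M, x, y⟩) = ⟨M, x, y⟩ := by
    simp only [switch, switching_switching (hM.apply_ne x) hxy,
      switching_apply_left (hM.apply_ne x) hxy]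
  refine card_nbij' switch switch ?_ ?_ ?_ ?_ <;> rintro ⟨M, x, y⟩ h <;>
    simp only [mem_coe, mem_sigma, mem_offDiag, mem_product] at h
  · obtain ⟨hM, hx, hy, hxy⟩ := h
    obtain ⟨hM', hx', hMx'⟩ := switching_mem_of_mem_crossingPoints hM hx hy hxy
    exact mem_sigma.mpr ⟨hM', mem_product.mpr ⟨hx', hMx'⟩⟩
  · obtain ⟨hM, hx, hy⟩ := h
    obtain ⟨hM', hx', hMx'⟩ := switching_mem_of_mem_innerPoints hM hx hy
    have hP := (mem_pairingsInducing.mp hM).1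
    exact mem_sigma.mpr ⟨hM', mem_offDiag.mpr ⟨hx', hMx', (hP.apply_ne x).symm⟩⟩
  · exact switch_switch (mem_pairingsInducing.mp h.1).1 h.2.2.2
  · refine switch_switch (mem_pairingsInducing.mp h.1).1 ?_
    rintro rfl
    exact mem_compl.mp (mem_innerPoints.mp h.2.2).1 (mem_innerPoints.mp h.2.1).1

/-- A difference truncates here only next to a factor that is zero. -/
theorem card_pairingsInducing_mul (A : Finset X) (j : ℕ) :
    #(pairingsInducing A j) * ((#A - 2 * j) * (#A - 2 * j - 1)) =
      #(pairingsInducing A (j + 1)) * (2 * (j + 1) * (#Aᶜ - (#A - 2 * (j + 1)))) := by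
  have h := card_sigma_offDiag_crossingPoints A j
  rw [card_sigma, card_sigma] at h
  rwa [sum_const_nat fun M hM => ?_, sum_const_nat fun M hM => ?_] at h
  · rw [card_product, (mem_pairingsInducing.mp hM).2,
      (mem_pairingsInducing.mp hM).1.card_innerPoints_compl,
      card_crossingPoints_of_mem_pairingsInducing hM]
  · rw [offDiag_card, card_crossingPoints_of_mem_pairingsInducing hM, Nat.mul_sub_one]

lemma card_pairingsInducing_le_succ {j : ℕ}
    (h : 2 * (j + 1) * (Fintype.card X + 3) ≤ (#A + 1) * (#A + 2)) :
    #(pairingsInducing A j) ≤ #(pairingsInducing A (j + 1)) := by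
  have hAX : #A + #Aᶜ = Fintype.card X := card_add_card_compl A
  -- `#A ≤ Fintype.card X` and `(#A + 1) (#A + 2) < (#A + 1) (#A + 3)`.
  have hjA : 2 * (j + 1) ≤ #A := by nlinarith
  obtain ⟨q, hq⟩ := Nat.exists_eq_add_of_le hjA
  have hidentity := card_pairingsInducing_mul A j
  rw [show #A - 2 * j = q + 2 by omega, show q + 2 - 1 = q + 1 from rfl,
    show #A - 2 * (j + 1) = q by omega] at hidentity
  have hratio : 2 * (j + 1) * (#Aᶜ - q) ≤ (q + 2) * (q + 1) := by
    rcases le_total #Aᶜ q with hle | hle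
    · rw [Nat.sub_eq_zero_of_le hle, mul_zero]
      exact Nat.zero_le _
    · obtain ⟨r, hr⟩ := Nat.exists_eq_add_of_le hle
      rw [hr, Nat.add_sub_cancel_left]
      rw [← hAX, hr, hq] at h
      nlinarith
  refine Nat.le_of_mul_le_mul_right ?_ (show 0 < (q + 2) * (q + 1) by positivity)
  rw [hidentity]
  exact Nat.mul_le_mul_left _ hratio

theorem card_pairingsInducing_le {j m : ℕ}
    (h : 2 * m * (Fintype.card X + 3) ≤ (#A + 1) * (#A + 2)) (hj : j ≤ m) :
    #(pairingsInducing A j) ≤ #(pairingsInducing A m) := by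
  induction m, hj using Nat.le_induction with
  | base => exact le_rfl
  | succ m _ ih =>
    exact (ih (le_trans (by gcongr; omega) h)).trans (card_pairingsInducing_le_succ h)

end Pairings

lemma mem_pairings {n d : ℕ} {M : Equiv.Perm (Fin n × Fin d)} :
    M ∈ pairings n d ↔ IsPairing M := by
  simp only [pairings, mem_filter, mem_univ, true_and]
  exact ⟨fun h => ⟨h.1, h.2⟩, fun h => ⟨h.involutive, h.apply_ne⟩⟩

lemma edgesWithin_eq_iff {n d : ℕ} {M : Equiv.Perm (Fin n × Fin d)} (hM : IsPairing M)
    (S : Finset (Fin n)) (j : ℕ) :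
    edgesWithin M S = j ↔ #(innerPoints M (S ×ˢ univ)) = 2 * j := by
  have h : edgesWithin M S = #(innerPoints M (S ×ˢ univ)) / 2 := by
    unfold edgesWithin
    congr 2
    ext x
    simp only [mem_filter, mem_univ, true_and, mem_innerPoints, mem_product, and_true]
  obtain ⟨r, hr⟩ := hM.even_card_innerPoints (S ×ˢ univ)
  omega

lemma sum_Zcount (n d i j : ℕ) :
    ∑ M ∈ pairings n d, Zcount n d i j M =
      ∑ S ∈ powersetCard i (univ : Finset (Fin n)),
        #(pairingsInducing (S ×ˢ (univ : Finset (Fin d))) j) := by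
  convert sum_card_bipartiteAbove_eq_sum_card_bipartiteBelow
    (s := pairings n d) (t := powersetCard i univ) (fun M S => edgesWithin M S = j) using 2
      with M _ S _
  · unfold Zcount
    congr 1
    ext S
    simp only [mem_filter, mem_univ, true_and, mem_bipartiteAbove, mem_powersetCard_univ]
  · congr 1
    ext M
    rw [mem_pairingsInducing, mem_bipartiteBelow, mem_pairings]
    exact and_congr_right fun hM => (edgesWithin_eq_iff hM S j).symm

lemma sum_Zcount_le {n d i m j : ℕ}
    (h : 2 * m * (n * d + 3) ≤ (i * d + 1) * (i * d + 2)) (hj : j ≤ m) :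
    ∑ M ∈ pairings n d, Zcount n d i j M ≤ ∑ M ∈ pairings n d, Zcount n d i m M := by
  rw [sum_Zcount, sum_Zcount]
  refine sum_le_sum fun S hS => card_pairingsInducing_le ?_ hj
  simpa only [card_product, card_univ, Fintype.card_prod, Fintype.card_fin,
    mem_powersetCard_univ.mp hS] using h

lemma two_mul_mul_le_of_density {n d i m : ℕ} {k α : ℝ} (hd : 0 < d) (hkα : 2 * k / d ≤ α)
    (hα : α ≤ 1) (hi : (i : ℝ) = α * n) (hm : (m : ℝ) = k * α * n) :
    2 * m * (n * d + 3) ≤ (i * d + 1) * (i * d + 2) := by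
  have hdR : (0 : ℝ) < d := by exact_mod_cast hd
  have hk : 2 * k ≤ α * d := (div_le_iff₀ hdR).mp hkα
  have hmi : 2 * (m : ℝ) = 2 * k * i := by rw [hm, hi]; ring
  have hmd : 2 * (m : ℝ) ≤ i * d := by
    calc 2 * (m : ℝ) = 2 * k * i := hmi
      _ ≤ α * d * i := by gcongr
      _ ≤ 1 * d * i := by gcongr
      _ = i * d := by ring
  have hmn : 2 * (m : ℝ) * (n * d) ≤ (i * d) * (i * d) := by
    calc 2 * (m : ℝ) * (n * d) = 2 * k * i * (n * d) := by rw [hmi]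
      _ ≤ α * d * i * (n * d) := by gcongr
      _ = (i * d) * (i * d) := by rw [hi]; ring
  suffices h : 2 * (m : ℝ) * (n * d + 3) ≤ (i * d + 1) * (i * d + 2) by exact_mod_cast h
  linarith

theorem EZ_max_at_kalphan_general {n d i m j : ℕ} (_hnd : Even (n * d))
    (h : 2 * m * (n * d + 3) ≤ (i * d + 1) * (i * d + 2)) (hj : j ≤ m) :
    EZ n d i j ≤ EZ n d i m :=
  div_le_div_of_nonneg_right (by exact_mod_cast sum_Zcount_le h hj) (Nat.cast_nonneg _)

/-- Lemma: fix `k ≥ 1` and `2k/d < α < 1`.  For all sufficiently large `n` (with `αn` and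
`kαn` integers), `E[Z_j] ≤ E[Z_{kαn}]` for all integers `0 ≤ j ≤ kαn`. -/
theorem EZ_max_at_kalphan (d : ℕ) (hd : 0 < d) (k α : ℝ) (hk : 1 ≤ k)
    (hα1 : 2 * k / d < α) (hα2 : α < 1) :
    ∃ N : ℕ, ∀ n : ℕ, N ≤ n → Even (n * d) →
      ∀ i m : ℕ, (i : ℝ) = α * n → (m : ℝ) = k * α * n →
        ∀ j : ℕ, j ≤ m → EZ n d i j ≤ EZ n d i m :=
  ⟨0, fun _ _ hnd _ _ hi hm _ hj =>
    EZ_max_at_kalphan_general hnd (two_mul_mul_le_of_density hd hα1.le hα2.le hi hm) hj⟩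

end
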